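/- Assume F is differentiable on (0,u) with derivative f and Assumption 1 holds. Let 0 < d < ρ < 1 and let x̄ ∈ (0,u) satisfy G(x̄) = 1 − ((1−ρ)d)/((1−d)ρ). Then for every x with 0 < x < x̄ there exists y with x < y < u such that x − d·y + ρ·((1 − F(y))/(1 − F(x)))·((1−d)/(1−ρ))·y > ((1−d)/(1−ρ))·x. In other words, when the current income lower bound is below the lending threshold x̄, the constant (no-experimentation) lending policy is strictly improvable. -/

import Mathlib

open Set MeasureTheory

/-!
Raising the repayment amount from `x` to `y = x` reproduces the value of constant lending, so it
suffices that the payoff has positive right derivative in `y` at `x`. This derivative is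
`ρ (1 - d) / (1 - ρ) * (1 - G x) - d`, which is positive exactly when `G x` lies below
`1 - (1 - ρ) d / ((1 - d) ρ)`.
-/

open scoped Topology

/-- The generalized failure rate `x f(x) / (1 - F(x))` of a distribution with cdf `F` and density
`f`, written `G` in the theorem. It is the elasticity of the repayment probability `1 - F`, up to
sign. Where `F x = 1` it takes the junk value `0`. -/
noncomputable def generalizedFailureRate (f F : ℝ → ℝ) (x : ℝ) : ℝ :=
  x * f x / (1 - F x)

/-- The level of the generalized failure rate below which a marginal raise of the repayment amount
pays off, for lending cost parameter `d` and discount factor `ρ`. -/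
noncomputable def lendingThreshold (d ρ : ℝ) : ℝ :=
  1 - ((1 - ρ) * d) / ((1 - d) * ρ)

/-- The one-step Bellman payoff of raising the repayment amount from `x` to `y` and then lending at
`y` forever: the lender receives `x`, lends `d * y`, and with the conditional repayment probability
`(1 - F y) / (1 - F x)` obtains the discounted value of constant lending at `y`. -/
noncomputable def raisePayoff (F : ℝ → ℝ) (d ρ x y : ℝ) : ℝ :=
  x - d * y + ρ * ((1 - F y) / (1 - F x)) * ((1 - d) / (1 - ρ)) * y

theorem eventually_nhdsGT_lt_of_hasDerivWithinAt_pos {g : ℝ → ℝ} {g' x : ℝ}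
    (hg : HasDerivWithinAt g g' (Ioi x) x) (hg' : 0 < g') : ∀ᶠ y in 𝓝[>] x, g x < g y := by
  have slope_pos : ∀ᶠ y in 𝓝[>] x, 0 < slope g x y :=
    ((hasDerivWithinAt_iff_tendsto_slope' self_notMem_Ioi).1 hg).eventually (lt_mem_nhds hg')
  filter_upwards [slope_pos, self_mem_nhdsWithin] with y hy hxy
  rw [slope_def_field, div_pos_iff_of_pos_right (sub_pos.2 hxy)] at hy
  exact sub_pos.1 hy

section

variable {f F : ℝ → ℝ} {d ρ x y : ℝ}

theorem raisePayoff_self (hFx : F x ≠ 1) (hρ : ρ ≠ 1) :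
    raisePayoff F d ρ x x = (1 - d) / (1 - ρ) * x := by
  have : 1 - ρ ≠ 0 := sub_ne_zero.2 hρ.symm
  rw [raisePayoff, div_self (sub_ne_zero.2 hFx.symm)]
  field_simp
  ring

theorem hasDerivWithinAt_raisePayoff {F' : ℝ} {s : Set ℝ} (hF : HasDerivWithinAt F F' s y) :
    HasDerivWithinAt (raisePayoff F d ρ x)
      (ρ * ((1 - d) / (1 - ρ)) * ((1 - F y - y * F') / (1 - F x)) - d) s y := by
  have cost := ((hasDerivWithinAt_id y s).const_mul d).const_sub x
  have continuation := ((((hF.const_sub 1).div_const (1 - F x)).const_mul ρ).mul_const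
    ((1 - d) / (1 - ρ))).mul (hasDerivWithinAt_id y s)
  refine (cost.add continuation).congr_deriv ?_
  simp only [id]
  ring

theorem hasDerivWithinAt_raisePayoff_self {s : Set ℝ} (hF : HasDerivWithinAt F (f x) s x)
    (hFx : F x ≠ 1) :
    HasDerivWithinAt (raisePayoff F d ρ x)
      (ρ * ((1 - d) / (1 - ρ)) * (1 - generalizedFailureRate f F x) - d) s x := by
  refine (hasDerivWithinAt_raisePayoff hF).congr_deriv ?_
  rw [generalizedFailureRate, sub_div (1 - F x), div_self (sub_ne_zero.2 hFx.symm)]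

theorem marginal_raisePayoff_pos_iff {γ : ℝ} (hd : d < 1) (hρ₀ : 0 < ρ) (hρ₁ : ρ < 1) :
    0 < ρ * ((1 - d) / (1 - ρ)) * (1 - γ) - d ↔ γ < lendingThreshold d ρ := by
  have hd' : 0 < 1 - d := sub_pos.2 hd
  have hρ' : 0 < 1 - ρ := sub_pos.2 hρ₁
  have factor : ρ * ((1 - d) / (1 - ρ)) * (1 - γ) - d =
      ρ * ((1 - d) / (1 - ρ)) * (lendingThreshold d ρ - γ) := by
    rw [lendingThreshold]
    field_simp
    ring
  rw [factor, mul_pos_iff_of_pos_left (by positivity), sub_pos]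

theorem eventually_nhdsGT_lt_raisePayoff (hF : HasDerivWithinAt F (f x) (Ioi x) x) (hFx : F x ≠ 1)
    (hd : d < 1) (hρ₀ : 0 < ρ) (hρ₁ : ρ < 1)
    (hx : generalizedFailureRate f F x < lendingThreshold d ρ) :
    ∀ᶠ y in 𝓝[>] x, (1 - d) / (1 - ρ) * x < raisePayoff F d ρ x y := by
  rw [← raisePayoff_self hFx hρ₁.ne]
  exact eventually_nhdsGT_lt_of_hasDerivWithinAt_pos (hasDerivWithinAt_raisePayoff_self hF hFx)
    ((marginal_raisePayoff_pos_iff hd hρ₀ hρ₁).2 hx)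

end

theorem stmt_14_general {u : EReal} {f F : ℝ → ℝ}
    (hF_deriv : ∀ x : ℝ, 0 < x → (x : EReal) < u → HasDerivWithinAt F (f x) (Ioi x) x)
    (hF_ne : ∀ x : ℝ, 0 < x → (x : EReal) < u → F x ≠ 1)
    (hG_mono : StrictMonoOn (generalizedFailureRate f F) {x : ℝ | 0 < x ∧ (x : EReal) < u})
    {d ρ : ℝ} (hd : d < 1) (hρ₀ : 0 < ρ) (hρ₁ : ρ < 1)
    {xbar : ℝ} (hxbar : (xbar : EReal) < u)
    (hxbar_le : generalizedFailureRate f F xbar ≤ lendingThreshold d ρ)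
    {x : ℝ} (hx : 0 < x) (hx_lt : x < xbar) :
    ∀ᶠ y : ℝ in 𝓝[>] x, (y : EReal) < u ∧ (1 - d) / (1 - ρ) * x < raisePayoff F d ρ x y := by
  have lt_u {y : ℝ} (hy : y < xbar) : (y : EReal) < u := (EReal.coe_lt_coe hy).trans hxbar
  have hGx : generalizedFailureRate f F x < lendingThreshold d ρ :=
    (hG_mono ⟨hx, lt_u hx_lt⟩ ⟨hx.trans hx_lt, hxbar⟩ hx_lt).trans_le hxbar_le
  filter_upwards [Ioo_mem_nhdsGT hx_lt, eventually_nhdsGT_lt_raisePayoff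
    (hF_deriv x hx (lt_u hx_lt)) (hF_ne x hx (lt_u hx_lt)) hd hρ₀ hρ₁ hGx] with y hy hlt
  exact ⟨lt_u hy.2, hlt⟩

/-- Below the lending threshold x̄ the constant (no-experimentation)
lending policy is strictly improvable: for 0 < x < x̄ there is y ∈ (x,u) whose
one-step payoff exceeds ((1−d)/(1−ρ))·x. -/
theorem stmt_14 (u : EReal) (hu : 0 < u)
    (f : ℝ → ℝ) (hf_cont : Continuous f)
    (hf_pos : ∀ x : ℝ, 0 < x → (x : EReal) < u → 0 < f x)
    (hf_zero : ∀ x : ℝ, x ≤ 0 ∨ u ≤ (x : EReal) → f x = 0)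
    (hf_prob : ∫ t : ℝ, f t = 1)
    (F : ℝ → ℝ) (hF : ∀ x : ℝ, F x = ∫ t in (0:ℝ)..x, f t)
    (hF_deriv : ∀ x : ℝ, 0 < x → (x : EReal) < u → HasDerivAt F (f x) x)
    (hF_lt : ∀ x : ℝ, (x : EReal) < u → F x < 1)
    (G : ℝ → ℝ) (hG : ∀ x : ℝ, G x = x * f x / (1 - F x))
    -- Assumption 1:
    (hG_mono : StrictMonoOn G {x : ℝ | 0 ≤ x ∧ (x : EReal) < u})
    (hG_zero : G 0 = 0)
    (hG_lim : ∀ c : ℝ, c < 1 → ∃ x : ℝ, 0 ≤ x ∧ (x : EReal) < u ∧ c < G x)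
    (d ρ : ℝ) (hd : 0 < d) (hdρ : d < ρ) (hρ : ρ < 1)
    (xbar : ℝ) (hxbar : 0 < xbar ∧ (xbar : EReal) < u)
    (hxbar_eq : G xbar = 1 - ((1 - ρ) * d) / ((1 - d) * ρ)) :
    ∀ x : ℝ, 0 < x → x < xbar →
      ∃ y : ℝ, x < y ∧ (y : EReal) < u ∧
        ((1 - d) / (1 - ρ)) * x <
          x - d * y + ρ * ((1 - F y) / (1 - F x)) * ((1 - d) / (1 - ρ)) * y := by
  intro x hx hx_lt
  obtain rfl : G = generalizedFailureRate f F := funext hG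
  obtain ⟨y, ⟨hyu, hlt⟩, hxy⟩ := ((stmt_14_general
    (fun z hz hzu ↦ (hF_deriv z hz hzu).hasDerivWithinAt) (fun z _ hzu ↦ (hF_lt z hzu).ne)
    (hG_mono.mono fun z hz ↦ ⟨hz.1.le, hz.2⟩) (hdρ.trans hρ) (hd.trans hdρ) hρ hxbar.2
    hxbar_eq.le hx hx_lt).and self_mem_nhdsWithin).exists
  exact ⟨y, hxy, hyu, hlt⟩
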